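/- The set of pairs (t,x) ∈ ℚ × ℚ satisfying x⁶ − p(t)x⁴ − q(t)x² − r(t) = 0 is exactly {(0, 2), (0, −2)}. -/

import Mathlib

/-- A positive integer that is one of two coprime factors of a perfect fourth power. -/
lemma B3_fourth {u v w : ℤ} (hu : 0 < u) (h : IsCoprime u v) (huv : u * v = w ^ 4) :
    ∃ e : ℤ, u = e ^ 4 := by
  obtain ⟨d, hd⟩ := exists_associated_pow_of_mul_eq_pow' h huv
  rcases Int.associated_iff.mp hd with h1 | h1
  · exact ⟨d, h1.symm⟩
  · have : 0 ≤ d ^ 4 := by positivity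
    omega

lemma B3_square {u v w : ℤ} (hu : 0 < u) (h : IsCoprime u v) (huv : u * v = w ^ 2) :
    ∃ e : ℤ, u = e ^ 2 := by
  obtain ⟨d, hd⟩ := exists_associated_pow_of_mul_eq_pow' h huv
  rcases Int.associated_iff.mp hd with h1 | h1
  · exact ⟨d, h1.symm⟩
  · have : 0 ≤ d ^ 2 := by positivity
    omega

lemma B3_five_aux {u v w : ℤ} (hu : 0 < u) (hv : 0 < v) (h : IsCoprime u v)
    (huv : u * v = 5 * w ^ 4) (h5 : (5 : ℤ) ∣ v) :
    ∃ e f : ℤ, IsCoprime e f ∧ (e * f) ^ 2 = w ^ 2 ∧ u + v = e ^ 4 + 5 * f ^ 4 := by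
  obtain ⟨v', rfl⟩ := h5
  have hv' : 0 < v' := by omega
  have hc : IsCoprime u v' := h.of_mul_right_right
  have huv' : u * v' = w ^ 4 := by linarith
  obtain ⟨e, he⟩ := B3_fourth hu hc huv'
  obtain ⟨f, hf⟩ := B3_fourth hv' hc.symm (by rw [mul_comm]; exact huv')
  refine ⟨e, f, ?_, ?_, by rw [he, hf]⟩
  · rw [he, hf] at hc
    exact (IsCoprime.pow_iff (by norm_num) (by norm_num)).mp hc
  · have h1 : ((e * f) ^ 2) ^ 2 = (w ^ 2) ^ 2 := by
      rw [← pow_mul, ← pow_mul, mul_pow, ← he, ← hf, huv']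
    exact (sq_eq_sq₀ (by positivity) (by positivity)).mp h1

lemma B3_five {u v w : ℤ} (hu : 0 < u) (hv : 0 < v) (h : IsCoprime u v)
    (huv : u * v = 5 * w ^ 4) :
    ∃ e f : ℤ, IsCoprime e f ∧ (e * f) ^ 2 = w ^ 2 ∧ u + v = e ^ 4 + 5 * f ^ 4 := by
  have h5 : Prime (5 : ℤ) := by norm_num
  rcases h5.dvd_or_dvd (Dvd.intro _ huv.symm) with h1 | h1
  · rw [add_comm]
    exact B3_five_aux hv hu h.symm (by rw [mul_comm]; exact huv) h1
  · exact B3_five_aux hu hv h huv h1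

/-- If a prime divides two integers with product `5 * w ^ 4`, it divides `w`. -/
lemma B3_prime_dvd {p u v w : ℤ} (hp : Prime p) (hu : p ∣ u) (hv : p ∣ v)
    (huv : u * v = 5 * w ^ 4) : p ∣ w := by
  have h5 : Prime (5 : ℤ) := by norm_num
  have h2 : p * p ∣ 5 * w ^ 4 := huv ▸ mul_dvd_mul hu hv
  rcases hp.dvd_or_dvd ((dvd_mul_right p p).trans h2) with h | h
  · have ha := hp.associated_of_dvd h5 h
    have h3 : p * p ∣ p * w ^ 4 := h2.trans (mul_dvd_mul_right ha.symm.dvd _)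
    exact hp.dvd_of_dvd_pow ((mul_dvd_mul_iff_left hp.ne_zero).mp h3)
  · exact hp.dvd_of_dvd_pow h

set_option maxHeartbeats 1000000 in
/-- Infinite descent: `a⁴ + a²b² - b⁴ = c²`. -/
lemma B3_descent (n : ℕ) : ∀ a b c : ℤ, 0 < a → a ≤ n → b ≠ 0 → IsCoprime a b →
    a ^ 4 + a ^ 2 * b ^ 2 - b ^ 4 = c ^ 2 → a = 1 ∧ b ^ 2 = 1 := by
  induction n with
  | zero => intro a b c h1 h2; exfalso; push_cast at h2; omega
  | succ n ih =>
  intro a b c ha han hb hab h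
  have hb2 : 0 < b ^ 2 := by positivity
  by_cases ha1 : a = 1
  · refine ⟨ha1, ?_⟩
    subst ha1
    have : 0 ≤ c ^ 2 := sq_nonneg c
    nlinarith
  exfalso
  have ha2 : 2 ≤ a := by omega
  -- the descent hypothesis in a convenient shape
  have key : ∀ g k e : ℤ, g ≠ 0 → k ≠ 0 → IsCoprime g k → |g| < a →
      g ^ 4 + g ^ 2 * k ^ 2 - k ^ 4 = e ^ 2 → g ^ 2 = 1 ∧ k ^ 2 = 1 := by
    intro g k e hg hk hgk hlt he
    have := ih |g| k e (abs_pos.mpr hg) (by push_cast at han; omega) hk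
      ((IsCoprime.abs_left_iff g k).mpr hgk) (by
        have : |g| ^ 4 = g ^ 4 := by rw [Even.pow_abs (by decide)]
        rw [sq_abs, this, he])
    refine ⟨?_, this.2⟩
    rw [← sq_abs, this.1]; norm_num
  have hprod : (2 * a ^ 2 + b ^ 2 - 2 * c) * (2 * a ^ 2 + b ^ 2 + 2 * c) = 5 * b ^ 4 := by
    linear_combination 4 * h
  have hpp : ∀ p : ℤ, Prime p → p ∣ a → ¬ p ∣ b := fun p hp h1 h2 =>
    hp.not_isUnit (hab.isUnit_of_dvd' h1 h2)
  have hpos : ∀ u v : ℤ, 0 < u + v → 0 < u * v → 0 < u ∧ 0 < v := by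
    intro u v h1 h2
    rcases pos_and_pos_or_neg_and_neg_of_mul_pos h2 with h3 | h3
    · exact h3
    · omega
  have hb4 : 0 < b ^ 4 := by positivity
  rcases Int.even_or_odd b with hbe | hbo
  · -- b even
    obtain ⟨B, rfl⟩ := hbe.two_dvd
    have hao : Odd a := by
      rw [← Int.not_even_iff_odd]
      intro hae
      exact hpp 2 Int.prime_two hae.two_dvd (dvd_mul_right _ _)
    have hB : B ≠ 0 := by rintro rfl; simp at hb
    have hco : Odd c := by
      have : Odd (c ^ 2) := by
        rw [← h]
        have h1 : Odd (a ^ 4) := hao.pow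
        have h2 : Even (a ^ 2 * (2 * B) ^ 2 - (2 * B) ^ 4) :=
          ⟨2 * a ^ 2 * B ^ 2 - 8 * B ^ 4, by ring⟩
        have := h1.add_even h2
        rwa [← add_sub_assoc] at this
      exact (Int.odd_pow' (by norm_num)).mp this
    have ha2o : Odd (a ^ 2) := hao.pow
    obtain ⟨u, hu⟩ : ∃ u, a ^ 2 + 2 * B ^ 2 - c = 2 * u := by
      obtain ⟨i, hi⟩ := ha2o
      obtain ⟨j, hj⟩ := hco
      exact ⟨i + B ^ 2 - j, by rw [hi, hj]; ring⟩
    obtain ⟨v, hv⟩ : ∃ v, v = a ^ 2 + 2 * B ^ 2 - u := ⟨_, rfl⟩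
    have hc : c = v - u := by linarith
    have huv : u * v = 5 * B ^ 4 := by
      have : a ^ 2 = u + v - 2 * B ^ 2 := by linarith
      have h3 : 4 * (u * v - 5 * B ^ 4) = 0 := by
        rw [hc] at h
        have h4 : (a ^ 2) ^ 2 + a ^ 2 * (2 * B) ^ 2 - (2 * B) ^ 4 = (v - u) ^ 2 := by
          rw [← h]; ring
        rw [this] at h4
        linear_combination h4
      linarith
    have hB4 : 0 < B ^ 4 := by positivity
    obtain ⟨hu0, hv0⟩ := hpos u v (by rw [hv]; have : 0 < a ^ 2 + 2 * B ^ 2 := by positivity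
                                      linarith) (by rw [huv]; positivity)
    have hcop : IsCoprime u v := by
      apply isCoprime_of_prime_dvd (by omega)
      intro p hp h1 h2
      have h3 := B3_prime_dvd hp h1 h2 huv
      have h4 : p ∣ a ^ 2 := by
        have : a ^ 2 = u + v - 2 * B * B := by rw [hv]; ring
        rw [this]
        exact dvd_sub (dvd_add h1 h2) (h3.mul_left _)
      exact hpp p hp (hp.dvd_of_dvd_pow h4) (h3.mul_left _)
    obtain ⟨e, f, hef, hefB, hsum⟩ := B3_five hu0 hv0 hcop huv
    have hf0 : f ≠ 0 := by
      rintro rfl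
      have : 0 < B ^ 2 := by positivity
      rw [← hefB] at this
      simp at this
    have hpy : PythagoreanTriple (e ^ 2 - f ^ 2) (2 * f ^ 2) a := by
      unfold PythagoreanTriple
      have : u + v = a ^ 2 + 2 * B ^ 2 := by rw [hv]; ring
      linear_combination (-1) * hsum + this - 2 * hefB
    have hodd : Odd (e ^ 2 - f ^ 2) := by
      have h1 : Odd ((e ^ 2 - f ^ 2) ^ 2) := by
        have h2 : (e ^ 2 - f ^ 2) ^ 2 = a ^ 2 - 2 * (2 * f ^ 4) := by
          unfold PythagoreanTriple at hpy
          linear_combination hpy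
        rw [h2]
        exact ha2o.sub_even (even_two_mul _)
      exact (Int.odd_pow' (by norm_num)).mp h1
    have hgcd : Int.gcd (e ^ 2 - f ^ 2) (2 * f ^ 2) = 1 := by
      rw [← Int.isCoprime_iff_gcd_eq_one]
      apply IsCoprime.mul_right
      · exact Int.isCoprime_two_right.mpr hodd
      · have h1 : IsCoprime (e ^ 2) (f ^ 2) := hef.pow
        have h2 := h1.add_mul_right_left (-1)
        have h3 : e ^ 2 + (-1) * f ^ 2 = e ^ 2 - f ^ 2 := by ring
        rwa [h3] at h2
    obtain ⟨m, k, h1, h2, h3, h4, h5, h6⟩ :=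
      hpy.coprime_classification' hgcd (Int.odd_iff.mp hodd) ha
    have hmk : m * k = f ^ 2 := by linarith
    have hf2 : 0 < f ^ 2 := by positivity
    have hcmk : IsCoprime m k := Int.isCoprime_iff_gcd_eq_one.mpr h4
    have hm0 : 0 < m := by
      rcases h6.lt_or_eq with h | h
      · exact h
      · rw [← h] at hmk; simp at hmk; omega
    have hk0 : 0 < k := by
      rw [← hmk] at hf2
      exact pos_of_mul_pos_right hf2 hm0.le
    obtain ⟨g, rfl⟩ := B3_square hm0 hcmk hmk
    obtain ⟨l, rfl⟩ := B3_square hk0 hcmk.symm (by rw [mul_comm]; exact hmk)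
    have hg0 : g ≠ 0 := by rintro rfl; simp at hm0
    have hl0 : l ≠ 0 := by rintro rfl; simp at hk0
    have hlt : |g| < a := by
      have : 0 < |g| := abs_pos.mpr hg0
      have h7 : |g| ≤ g ^ 2 := by rw [← sq_abs]; exact le_self_pow₀ (by omega) (by norm_num)
      have h8 : g ^ 2 ≤ (g ^ 2) ^ 2 := le_self_pow₀ (by omega) (by norm_num)
      have h9 : 0 < (l ^ 2) ^ 2 := by positivity
      omega
    have := key g l e hg0 hl0
      ((IsCoprime.pow_iff (by norm_num) (by norm_num)).mp hcmk) hlt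
      (by linear_combination (-1) * h1 + hmk)
    rw [this.1, this.2] at h5
    omega
  · -- b odd
    have hb2o : Odd (b ^ 2) := hbo.pow
    have hoddu : Odd (2 * a ^ 2 + b ^ 2 - 2 * c) := by
      obtain ⟨i, hi⟩ := hb2o
      exact ⟨a ^ 2 + i - c, by rw [hi]; ring⟩
    obtain ⟨hu0, hv0⟩ := hpos (2 * a ^ 2 + b ^ 2 - 2 * c) (2 * a ^ 2 + b ^ 2 + 2 * c) (by
      have : 0 < 4 * a ^ 2 + 2 * b ^ 2 := by positivity
      linarith) (by rw [hprod]; positivity)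
    have hcop : IsCoprime (2 * a ^ 2 + b ^ 2 - 2 * c) (2 * a ^ 2 + b ^ 2 + 2 * c) := by
      apply isCoprime_of_prime_dvd (by omega)
      intro p hp h1 h2
      have h3 := B3_prime_dvd hp h1 h2 hprod
      have h4 : p ∣ 2 * (2 * a ^ 2) := by
        have : 2 * (2 * a ^ 2) = (2 * a ^ 2 + b ^ 2 - 2 * c) + (2 * a ^ 2 + b ^ 2 + 2 * c)
          - 2 * b * b := by ring
        rw [this]
        exact dvd_sub (dvd_add h1 h2) (h3.mul_left _)
      have hp2 : ¬ p ∣ 2 := by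
        intro h5
        have := (hp.associated_of_dvd Int.prime_two h5).symm.dvd.trans h1
        exact (Int.not_even_iff_odd.mpr hoddu) (even_iff_two_dvd.mpr this)
      have h6 := ((hp.dvd_or_dvd ((hp.dvd_or_dvd h4).resolve_left hp2))).resolve_left hp2
      exact hpp p hp (hp.dvd_of_dvd_pow h6) h3
    obtain ⟨e, f, hef, hefb, hsum⟩ := B3_five hu0 hv0 hcop hprod
    have hefo : Odd (e * f) := by
      rw [← hefb] at hb2o
      exact (Int.odd_pow' (by norm_num)).mp hb2o
    obtain ⟨heo, hfo⟩ := Int.odd_mul.mp hefo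
    have hf0 : f ≠ 0 := by rintro rfl; simp at hfo
    have hf2o : Odd (f ^ 2) := hfo.pow
    have he2o : Odd (e ^ 2) := heo.pow
    obtain ⟨w, hw⟩ : ∃ w, e ^ 2 - f ^ 2 = 2 * w := (he2o.sub_odd hf2o).two_dvd
    have hpy : PythagoreanTriple (f ^ 2) w a := by
      unfold PythagoreanTriple
      have : 4 * (f ^ 2 * f ^ 2 + w * w - a * a) = 0 := by
        have h1 : (e ^ 2 - f ^ 2) ^ 2 = 4 * (w * w) := by rw [hw]; ring
        linear_combination (-1) * h1 - hsum - 2 * hefb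
      linarith
    have hgcd : Int.gcd (f ^ 2) w = 1 := by
      rw [← Int.isCoprime_iff_gcd_eq_one]
      have h1 : IsCoprime (f ^ 2) (e ^ 2) := hef.symm.pow
      have h2 := h1.add_mul_left_right (-1)
      have h3 : e ^ 2 + f ^ 2 * (-1) = 2 * w := by rw [← hw]; ring
      rw [h3] at h2
      exact h2.of_mul_right_right
    obtain ⟨m, k, h1, h2, h3, h4, h5, h6⟩ :=
      hpy.coprime_classification' hgcd (Int.odd_iff.mp hf2o) ha
    have hf2 : 0 < f ^ 2 := by positivity
    have hcmk : IsCoprime m k := Int.isCoprime_iff_gcd_eq_one.mpr h4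
    have hmul : (m - k) * (m + k) = f ^ 2 := by rw [h1]; ring
    obtain ⟨hp1, hp2⟩ : 0 < m - k ∧ 0 < m + k := by
      have := abs_lt_of_sq_lt_sq (a := k) (b := m) (by linarith) h6
      rw [abs_lt] at this
      omega
    have hoddmk : Odd (m - k) := by
      rw [Int.odd_iff]; omega
    have hcc : IsCoprime (m - k) (m + k) := by
      apply isCoprime_of_prime_dvd (by omega)
      intro p hp h7 h8
      have hp2 : ¬ p ∣ 2 := by
        intro h9
        have := (hp.associated_of_dvd Int.prime_two h9).symm.dvd.trans h7
        exact (Int.not_even_iff_odd.mpr hoddmk) (even_iff_two_dvd.mpr this)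
      have h9 : p ∣ 2 * m := by
        have := dvd_add h7 h8
        ring_nf at this; rwa [mul_comm]
      have h10 : p ∣ 2 * k := by
        have := dvd_sub h8 h7
        ring_nf at this; rwa [mul_comm]
      exact hp.not_isUnit (hcmk.isUnit_of_dvd' ((hp.dvd_or_dvd h9).resolve_left hp2)
        ((hp.dvd_or_dvd h10).resolve_left hp2))
    obtain ⟨g, hg⟩ := B3_square hp1 hcc hmul
    obtain ⟨l, hl⟩ := B3_square hp2 hcc.symm (by rw [mul_comm]; exact hmul)
    have hg0 : g ≠ 0 := by rintro rfl; simp at hg; omega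
    have hl0 : l ≠ 0 := by rintro rfl; simp at hl; omega
    have h2a : 2 * a = g ^ 4 + l ^ 4 := by
      have : g ^ 4 + l ^ 4 = (g ^ 2) ^ 2 + (l ^ 2) ^ 2 := by ring
      rw [this, ← hg, ← hl, h3]; ring
    have hglc : IsCoprime l g := by
      rw [hg, hl] at hcc
      exact ((IsCoprime.pow_iff (by norm_num) (by norm_num)).mp hcc).symm
    have hlt : |l| < a := by
      by_contra hcon
      push Not at hcon
      have hg4 : 0 < g ^ 4 := by positivity
      have hl4 : l ^ 4 = |l| ^ 4 := by rw [Even.pow_abs (by decide)]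
      rw [hl4] at h2a
      have h7 : 2 ≤ |l| := by omega
      have h8 : 2 ^ 3 ≤ |l| ^ 3 := pow_le_pow_left₀ (by norm_num) h7 3
      have h9 : |l| ^ 4 = |l| ^ 3 * |l| := by ring
      nlinarith
    have := key l g e hl0 hg0 hglc hlt (by
      have h7 : e ^ 2 = f ^ 2 + 2 * w := by linarith
      rw [h7, h2, h1]
      have h8 : l ^ 4 + l ^ 2 * g ^ 2 - g ^ 4 = (l ^ 2) ^ 2 + l ^ 2 * g ^ 2 - (g ^ 2) ^ 2 := by
        ring
      rw [h8, ← hg, ← hl]; ring)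
    have h7 : g ^ 4 + l ^ 4 = (g ^ 2) ^ 2 + (l ^ 2) ^ 2 := by ring
    rw [h7, this.1, this.2] at h2a
    omega

/-- The rational points of the elliptic curve `v² = m³ + m² - m`. -/
lemma B3_elliptic (m v : ℚ) (hm : m ≠ 0) (h : v ^ 2 = m ^ 3 + m ^ 2 - m) : m ^ 2 = 1 := by
  obtain ⟨p, hp⟩ : ∃ p : ℤ, p = m.num := ⟨_, rfl⟩
  obtain ⟨q, hq⟩ : ∃ q : ℤ, q = (m.den : ℤ) := ⟨_, rfl⟩
  have hq0 : 0 < q := by rw [hq]; exact_mod_cast m.pos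
  have hqq : (q : ℚ) ≠ 0 := by exact_mod_cast hq0.ne'
  have hmq : m = p / q := by
    rw [hp, hq]; push_cast; exact (Rat.num_div_den m).symm
  have hp0 : p ≠ 0 := by rw [hp]; exact Rat.num_ne_zero.mpr hm
  have hpq : IsCoprime p q := by
    rw [hp, hq, Int.isCoprime_iff_gcd_eq_one]
    have := m.reduced
    simpa [Int.gcd, Nat.Coprime] using this
  have hsq : IsSquare (q * (p * (p ^ 2 + p * q - q ^ 2))) := by
    rw [← Rat.isSquare_intCast_iff]
    refine ⟨v * q ^ 2, ?_⟩
    push_cast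
    have : v * (q : ℚ) ^ 2 * (v * q ^ 2) = v ^ 2 * q ^ 4 := by ring
    rw [this, h, hmq]
    field_simp
  obtain ⟨k, hk⟩ := hsq
  have hN1 : IsCoprime p (p ^ 2 + p * q - q ^ 2) := by
    have h1 : IsCoprime p (-(q ^ 2)) := (hpq.pow_right).neg_right
    have h2 := h1.add_mul_left_right (p + q)
    have h3 : -(q ^ 2) + p * (p + q) = p ^ 2 + p * q - q ^ 2 := by ring
    rwa [h3] at h2
  have hN2 : IsCoprime q (p ^ 2 + p * q - q ^ 2) := by
    have h1 : IsCoprime q (p ^ 2) := hpq.symm.pow_right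
    have h2 := h1.add_mul_left_right (p - q)
    have h3 : p ^ 2 + q * (p - q) = p ^ 2 + p * q - q ^ 2 := by ring
    rwa [h3] at h2
  have hc1 : IsCoprime q (p * (p ^ 2 + p * q - q ^ 2)) := hpq.symm.mul_right hN2
  obtain ⟨b, hb⟩ := B3_square hq0 hc1 (by rw [hk]; ring : _ = k ^ 2)
  have hb0 : b ≠ 0 := by rintro rfl; simp at hb; omega
  have hprodpos : 0 ≤ p * (p ^ 2 + p * q - q ^ 2) := by
    have : 0 ≤ q * (p * (p ^ 2 + p * q - q ^ 2)) := by rw [hk]; exact mul_self_nonneg k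
    exact nonneg_of_mul_nonneg_right this hq0
  have hNne : p ^ 2 + p * q - q ^ 2 ≠ 0 := by
    intro h0
    rw [h0, isCoprime_zero_right, Int.isUnit_iff] at hN1
    rw [h0, isCoprime_zero_right, Int.isUnit_iff] at hN2
    rcases hN1 with h1 | h1 <;> rcases hN2 with h2 | h2 <;> rw [h1, h2] at h0 <;> norm_num at h0
  have hMpos : 0 < p * (p ^ 2 + p * q - q ^ 2) :=
    lt_of_le_of_ne hprodpos (mul_ne_zero hp0 hNne).symm
  obtain ⟨j, hj⟩ := B3_square hMpos hc1.symm (by rw [mul_comm, hk]; ring : _ = k ^ 2)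
  have fin : p ^ 2 = 1 → q ^ 2 = 1 → m ^ 2 = 1 := by
    intro h1 h2
    rw [hmq, div_pow]
    have h1' : (p : ℚ) ^ 2 = 1 := by exact_mod_cast h1
    have h2' : (q : ℚ) ^ 2 = 1 := by exact_mod_cast h2
    rw [h1', h2']; norm_num
  rcases lt_or_gt_of_ne hp0 with hneg | hpos
  · have hNneg : p ^ 2 + p * q - q ^ 2 < 0 := by
      by_contra hcon; push Not at hcon; nlinarith
    obtain ⟨a, ha⟩ := B3_square (u := -p) (by omega) hN1.neg_neg (by linarith : _ = j ^ 2)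
    obtain ⟨c, hc⟩ := B3_square (u := -(p ^ 2 + p * q - q ^ 2)) (by omega) hN1.neg_neg.symm
      (by linarith : _ = j ^ 2)
    have hpa : p = - a ^ 2 := by linarith
    have ha0 : a ≠ 0 := by rintro rfl; simp at hpa; omega
    have hcop : IsCoprime |b| a := by
      rw [IsCoprime.abs_left_iff]
      have := hpq.neg_left
      rw [ha, hb] at this
      exact ((IsCoprime.pow_iff (by norm_num) (by norm_num)).mp this).symm
    have := B3_descent |b|.natAbs |b| a c (abs_pos.mpr hb0) Int.le_natAbs ha0 hcop (by
      have h4 : |b| ^ 4 = b ^ 4 := by rw [Even.pow_abs (by decide)]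
      rw [h4, sq_abs, ← hc, hpa, hb]; ring)
    apply fin
    · rw [hpa, this.2]; norm_num
    · rw [hb, ← sq_abs b, this.1]; norm_num
  · have hNpos : 0 < p ^ 2 + p * q - q ^ 2 := by
      by_contra hcon; push Not at hcon; nlinarith
    obtain ⟨a, ha⟩ := B3_square hpos hN1 hj
    obtain ⟨c, hc⟩ := B3_square hNpos hN1.symm (by rw [mul_comm]; exact hj)
    have ha0 : a ≠ 0 := by rintro rfl; simp at ha; omega
    have hcop : IsCoprime |a| b := by
      rw [IsCoprime.abs_left_iff]
      rw [ha, hb] at hpq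
      exact (IsCoprime.pow_iff (by norm_num) (by norm_num)).mp hpq
    have := B3_descent |a|.natAbs |a| b c (abs_pos.mpr ha0) Int.le_natAbs hb0 hcop (by
      have h4 : |a| ^ 4 = a ^ 4 := by rw [Even.pow_abs (by decide)]
      rw [h4, sq_abs, ← hc, ha, hb]; ring)
    apply fin
    · rw [ha, ← sq_abs a, this.1]; norm_num
    · rw [hb, this.2]; norm_num

/-- The rational points of the curve `ℬ₃ : x⁶ − p(t)x⁴ − q(t)x² − r(t) = 0`, where
`p(t) = (4t − 1)(4t − 9)`, `q(t) = 8(4t − 3)(16t² − 8t + 5)` and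
`r(t) = 16(16t² − 8t + 5)²`, are exactly `(0, ±2)`. -/
theorem curve_B3_points (t x : ℚ) :
    x ^ 6 - ((4 * t - 1) * (4 * t - 9)) * x ^ 4 -
      (8 * (4 * t - 3) * (16 * t ^ 2 - 8 * t + 5)) * x ^ 2 -
      16 * (16 * t ^ 2 - 8 * t + 5) ^ 2 = 0 ↔
    (t = 0 ∧ x = 2) ∨ (t = 0 ∧ x = -2) := by
  constructor
  · intro h
    have hx : x ≠ 0 := by
      rintro rfl
      have h1 : 0 < 16 * t ^ 2 - 8 * t + 5 := by nlinarith [sq_nonneg (4 * t - 1)]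
      have h2 : 0 < (16 * t ^ 2 - 8 * t + 5) ^ 2 := by positivity
      norm_num at h
      rw [h] at h1
      exact lt_irrefl _ h1
    obtain ⟨y, hy⟩ : ∃ y : ℚ, y * x ^ 2 = 4 * (16 * t ^ 2 - 8 * t + 5) + (4 * t - 3) * x ^ 2 :=
      ⟨(4 * (16 * t ^ 2 - 8 * t + 5) + (4 * t - 3) * x ^ 2) / x ^ 2, by field_simp⟩
    have hx4 : x ^ 4 ≠ 0 := pow_ne_zero _ hx
    have hy2 : 16 * t = y ^ 2 - x ^ 2 := by
      have h1 : x ^ 4 * (16 * t - (y ^ 2 - x ^ 2)) = 0 := by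
        have h2 : (y * x ^ 2) ^ 2 = (4 * (16 * t ^ 2 - 8 * t + 5) + (4 * t - 3) * x ^ 2) ^ 2 := by
          rw [hy]
        linear_combination h - h2
      have := (mul_eq_zero.mp h1).resolve_left hx4
      linarith
    have ht : t = (y ^ 2 - x ^ 2) / 16 := by linarith
    have hz : (x * (y + 2)) ^ 2 = (y ^ 2 - 4) ^ 2 + 64 := by
      rw [ht] at hy
      linear_combination 4 * hy
    obtain ⟨z, hzz⟩ : ∃ z, z = x * (y + 2) := ⟨_, rfl⟩
    rw [← hzz] at hz
    obtain ⟨m, hm⟩ : ∃ m, m = (z + y ^ 2 - 4) / 8 := ⟨_, rfl⟩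
    have hmm : m * (z - y ^ 2 + 4) = 8 := by
      rw [hm]; linear_combination hz / 8
    have hm0 : m ≠ 0 := by rintro h0; rw [h0] at hmm; norm_num at hmm
    have hmy : m ^ 2 - 1 = m * (y ^ 2 - 4) / 4 := by
      have : z - y ^ 2 + 4 = 8 * m - 2 * (y ^ 2 - 4) := by rw [hm]; ring
      rw [this] at hmm
      linear_combination hmm / 8
    have hm1 := B3_elliptic m (y * m / 2) hm0 (by linear_combination (-m) * hmy)
    have hy4 : y ^ 2 = 4 := by
      rw [hm1] at hmy
      have : m * (y ^ 2 - 4) = 0 := by linarith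
      have := (mul_eq_zero.mp this).resolve_left hm0
      linarith
    have hyy : (y - 2) * (y + 2) = 0 := by linear_combination hy4
    rcases mul_eq_zero.mp hyy with h1 | h1
    · have hy' : y = 2 := by linarith
      have hx2 : (x - 2) * (x + 2) = 0 := by
        rw [hzz, hy'] at hz
        linear_combination hz / 16
      have ht0 : t = 0 := by rw [ht, hy4]; linear_combination (-1 / 16) * hx2
      rcases mul_eq_zero.mp hx2 with h2 | h2
      · left; exact ⟨ht0, by linarith⟩
      · right; exact ⟨ht0, by linarith⟩
    · rw [hzz, h1, hy4] at hz
      norm_num at hz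
  · rintro (⟨rfl, rfl⟩ | ⟨rfl, rfl⟩) <;> norm_num
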